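/- For n ≥ 1, the number of synchronized Tamari intervals of size n equals (2/(n(n+1))) · C(3n, n-1). -/

import Mathlib

/-- Binary trees: a leaf or a binary node with two subtrees. -/
inductive BT : Type
  | leaf : BT
  | node : BT → BT → BT

namespace BT

/-- Number of binary (internal) nodes. -/
def size : BT → ℕ
  | leaf => 0
  | node l r => l.size + r.size + 1

/-- One right rotation somewhere in the tree: ((A,B),C) ↦ (A,(B,C)). -/
inductive Rot : BT → BT → Prop
  | rotate (A B C : BT) : Rot (node (node A B) C) (node A (node B C))
  | left {l l' : BT} (r : BT) : Rot l l' → Rot (node l r) (node l' r)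
  | right (l : BT) {r r' : BT} : Rot r r' → Rot (node l r) (node l r')

/-- Tamari order: reflexive-transitive closure of right rotation. -/
def tle (T T' : BT) : Prop := Relation.ReflTransGen Rot T T'

/-- Bracket-vector: sizes of right subtrees of nodes, in infix order. -/
def bracket : BT → List ℕ
  | leaf => []
  | node l r => bracket l ++ r.size :: bracket r

/-- Dual bracket-vector: sizes of left subtrees of nodes, in infix order. -/
def dualBracket : BT → List ℕ
  | leaf => []
  | node l r => dualBracket l ++ l.size :: dualBracket r

/-- Canopy word: for each leaf (left to right), 1 if it is a left child, 0 if a right child;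
the argument `b` is the value assigned to the tree if it is itself a leaf. -/
def canopyAux (b : ℕ) : BT → List ℕ
  | leaf => [b]
  | node l r => canopyAux 1 l ++ canopyAux 0 r

/-- Canopy-vector of a binary tree. -/
def canopy (T : BT) : List ℕ := canopyAux 1 T

/-- Left-right mirror. -/
def mir : BT → BT
  | leaf => leaf
  | node l r => node (mir r) (mir l)

/-- Tamari interval of size n. -/
def interval (p : BT × BT) (n : ℕ) : Prop :=
  p.1.size = n ∧ p.2.size = n ∧ tle p.1 p.2

/-- Tamari interval (of unspecified size). -/
def isInt (p : BT × BT) : Prop := p.1.size = p.2.size ∧ tle p.1 p.2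

/-- The rise operation (T,T') ↦ ((T,ε),(ε,T')). -/
def riseF (p : BT × BT) : BT × BT := (node p.1 leaf, node leaf p.2)

/-- An interval is modern when its rise is again an interval. -/
def modern (p : BT × BT) : Prop := tle (node p.1 leaf) (node leaf p.2)

/-- Infinitely modern: every iterated rise is an interval. -/
def infModern (p : BT × BT) : Prop :=
  ∀ k : ℕ, tle ((riseF^[k] p).1) ((riseF^[k] p).2)

/-- Synchronized: equal canopies. -/
def synced (p : BT × BT) : Prop := canopy p.1 = canopy p.2

/-- Self-dual: equal to its dual (mir T', mir T). -/
def selfDual (p : BT × BT) : Prop := mir p.2 = p.1 ∧ mir p.1 = p.2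

/-- Number of positions where the two canopies agree. -/
def agreeCount (p : BT × BT) : ℕ :=
  ((List.range (p.1.size + 1)).filter
    (fun i => (canopy p.1).getD i 0 == (canopy p.2).getD i 0)).length

/-- Number of canopy positions of joint type (a on top, b on bottom), for an interval (T,T')
with T' the upper tree. -/
def typeCount (a b : ℕ) (p : BT × BT) : ℕ :=
  ((List.range (p.1.size + 1)).filter
    (fun i => ((canopy p.2).getD i 0 == a) && ((canopy p.1).getD i 0 == b))).length

end BT

/-!
A synchronized interval with upper tree `node l r` is obtained in a unique way from synchronized
intervals `(f, l)` and `(S, r)` by inserting a node with left subtree `f` into the left branch of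
`S`, at any position but the lowest one (unless `S` is a leaf). Recording the length of the left
branch of the lower tree by `x`, the generating series `I x` therefore satisfies
`(x - 1) (I x - 1) = t x I x (x - 1 + I x - I 1)`, which determines it. If `B = 1 + t B³` is the
series of ternary trees and `W = 1 + t x B W (1 + t B² W)`, then the solution is
`W - x t² B⁴ W²`; as `W = B` at `x = 1`, this gives `I 1 = 3 B - 1 - B²`, and the coefficients of
powers of `B` are Fuss–Catalan numbers.
-/

open PowerSeries
open Finset.HasAntidiagonal (antidiagonal mem_antidiagonal)

namespace BT

/-- Number of nodes on the left branch of a tree, from the root to the leftmost leaf. -/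
def spine : BT → ℕ
  | leaf => 0
  | node l _ => l.spine + 1

/-- `splice f i S` inserts a node with left subtree `f` into the left branch of `S`, below the `i`
topmost nodes of that branch; the part of `S` below the insertion point becomes the right subtree
of the new node. Only `i ≤ S.spine` is meaningful. -/
def splice (f : BT) : ℕ → BT → BT
  | 0, S => node f S
  | _ + 1, leaf => node f leaf
  | i + 1, node l r => node (splice f i l) r

lemma eq_leaf_of_size_eq_zero {T : BT} (h : T.size = 0) : T = leaf := by
  cases T with
  | leaf => rfl
  | node l r => simp [size] at h

lemma spine_eq_zero_iff {T : BT} : T.spine = 0 ↔ T.size = 0 := by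
  cases T <;> simp [spine, size]

lemma size_splice (f : BT) (i : ℕ) (S : BT) : (splice f i S).size = f.size + S.size + 1 := by
  fun_induction splice f i S with
  | case1 | case2 => rfl
  | case3 i l r ih => simp only [size, ih]; omega

lemma spine_splice {f S : BT} {i : ℕ} (hi : i ≤ S.spine) :
    (splice f i S).spine = i + f.spine + 1 := by
  fun_induction splice f i S with
  | case1 => simp [spine]
  | case2 => simp [spine] at hi
  | case3 i l r ih => rw [spine, ih (Nat.le_of_succ_le_succ hi)]; omega

lemma splice_injective {f f' S S' : BT} {i i' : ℕ} (hf : f.size = f'.size)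
    (hi : i ≤ S.spine) (hi' : i' ≤ S'.spine) (h : splice f i S = splice f' i' S') :
    f = f' ∧ i = i' ∧ S = S' := by
  induction i generalizing S S' i' with
  | zero =>
    match i', S' with
    | 0, S' => simpa [splice] using h
    | i' + 1, leaf => simp [spine] at hi'
    | i' + 1, node l' r' =>
      rw [splice, splice, node.injEq] at h
      have := congrArg size h.1
      rw [size_splice] at this
      omega
  | succ i ih =>
    match S, i', S' with
    | leaf, _, _ => simp [spine] at hi
    | node l r, 0, S' =>
      rw [splice, splice, node.injEq] at h
      have := congrArg size h.1
      rw [size_splice] at this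
      omega
    | node l r, i' + 1, leaf => simp [spine] at hi'
    | node l r, i' + 1, node l' r' =>
      rw [splice, splice, node.injEq] at h
      obtain ⟨rfl, rfl, rfl⟩ := ih (Nat.le_of_succ_le_succ hi) (Nat.le_of_succ_le_succ hi') h.1
      exact ⟨rfl, rfl, by rw [h.2]⟩

/-! ### The Tamari order -/

lemma Rot.size_eq {T T' : BT} (h : Rot T T') : T.size = T'.size := by
  induction h with
  | rotate A B C => simp only [size]; omega
  | left r _ ih => simp only [size, ih]
  | right l _ ih => simp only [size, ih]

lemma tle.size_eq {T T' : BT} (h : tle T T') : T.size = T'.size := by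
  induction h with
  | refl => rfl
  | tail _ h ih => rw [ih, h.size_eq]

lemma tle.refl (T : BT) : tle T T := Relation.ReflTransGen.refl

lemma tle.trans {A B C : BT} (h : tle A B) (h' : tle B C) : tle A C :=
  Relation.ReflTransGen.trans h h'

lemma Rot.tle {A B : BT} (h : Rot A B) : tle A B := Relation.ReflTransGen.single h

lemma tle.left {l l' : BT} (h : tle l l') (r : BT) : tle (node l r) (node l' r) :=
  Relation.ReflTransGen.lift (node · r) (fun _ _ => Rot.left r) _ _ h

lemma tle.right {r r' : BT} (l : BT) (h : tle r r') : tle (node l r) (node l r') :=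
  Relation.ReflTransGen.lift (node l) (fun _ _ => Rot.right l) _ _ h

lemma splice_tle_node (f S : BT) (i : ℕ) : tle (splice f i S) (node f S) := by
  fun_induction splice f i S with
  | case1 | case2 => exact tle.refl _
  | case3 i l r ih => exact (ih.left r).trans (Rot.rotate _ _ _).tle

lemma Rot.exists_eq_splice {T f S : BT} {i : ℕ} (hi : i ≤ S.spine) (h : Rot T (splice f i S)) :
    ∃ f₀ i₀ S₀, i₀ ≤ S₀.spine ∧ T = splice f₀ i₀ S₀ ∧ BT.tle f₀ f ∧ BT.tle S₀ S := by
  induction i generalizing T S with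
  | zero =>
    cases h with
    | rotate _ B C => exact ⟨f, 1, node B C, by simp [spine], rfl, tle.refl _, tle.refl _⟩
    | left _ h => exact ⟨_, 0, S, hi, rfl, h.tle, tle.refl _⟩
    | right _ h => exact ⟨f, 0, _, Nat.zero_le _, rfl, tle.refl _, h.tle⟩
  | succ i ih =>
    match S with
    | leaf => simp [spine] at hi
    | node l r =>
      rw [splice] at h
      have hi : i ≤ l.spine := Nat.le_of_succ_le_succ hi
      generalize hx : splice f i l = x at h
      cases h with
      | rotate _ B C =>
        exact ⟨f, i + 2, node (node l B) C, by simp only [spine]; omega, by rw [← hx]; rfl,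
          tle.refl _, (Rot.rotate _ _ _).tle⟩
      | left _ h =>
        obtain ⟨f₀, i₀, S₀, hi₀, rfl, hf, hS⟩ := ih hi (hx ▸ h)
        exact ⟨f₀, i₀ + 1, node S₀ r, Nat.succ_le_succ hi₀, rfl, hf, hS.left r⟩
      | @right _ r₀ _ h =>
        exact ⟨f, i + 1, node l r₀, Nat.succ_le_succ hi, by rw [← hx]; rfl, tle.refl _,
          h.tle.right l⟩

lemma tle_node_iff {T l r : BT} : tle T (node l r) ↔
    ∃ f i S, i ≤ S.spine ∧ T = splice f i S ∧ tle f l ∧ tle S r := by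
  constructor
  · intro h
    induction h using Relation.ReflTransGen.head_induction_on with
    | refl => exact ⟨l, 0, r, Nat.zero_le _, rfl, tle.refl _, tle.refl _⟩
    | head h _ ih =>
      obtain ⟨f, i, S, hi, rfl, hf, hS⟩ := ih
      obtain ⟨f₀, i₀, S₀, hi₀, rfl, hf₀, hS₀⟩ := h.exists_eq_splice hi
      exact ⟨f₀, i₀, S₀, hi₀, rfl, hf₀.trans hf, hS₀.trans hS⟩
  · rintro ⟨f, i, S, -, rfl, hf, hS⟩
    exact (splice_tle_node f S i).trans ((hf.left _).trans (hS.right _))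

/-! ### Canopies -/

lemma length_canopyAux (b : ℕ) (T : BT) : (canopyAux b T).length = T.size + 1 := by
  induction T generalizing b with
  | leaf => rfl
  | node l r ihl ihr => simp only [canopyAux, size, List.length_append, ihl, ihr]; omega

lemma canopy_eq_cons (T : BT) : canopy T = 1 :: (canopy T).tail := by
  unfold canopy
  induction T with
  | leaf => rfl
  | node l r ihl _ => rw [canopyAux, ihl]; rfl

lemma canopy_splice {f S : BT} {i : ℕ} (hi : i ≤ S.spine) :
    canopy (splice f i S) = canopy f ++ (if i = S.spine then 0 else 1) :: (canopy S).tail := by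
  fun_induction splice f i S with
  | case1 S =>
    cases S with
    | leaf => rfl
    | node l r =>
      rw [spine, if_neg (Nat.succ_ne_zero _).symm, ← canopy_eq_cons]
      rfl
  | case2 => simp [spine] at hi
  | case3 i l r ih =>
    have tail_node : (canopy (node l r)).tail = (canopy l).tail ++ canopyAux 0 r := by
      change (canopy l ++ canopyAux 0 r).tail = _
      rw [canopy_eq_cons]
      rfl
    change canopy (splice f i l) ++ canopyAux 0 r = _
    rw [ih (Nat.le_of_succ_le_succ hi), tail_node]
    simp [spine]

lemma canopy_splice_eq_canopy_node_iff {f S l r : BT} {i : ℕ} (hi : i ≤ S.spine)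
    (hf : f.size = l.size) (hS : S.size = r.size) :
    canopy (splice f i S) = canopy (node l r) ↔
      canopy f = canopy l ∧ canopy S = canopy r ∧ i < max 1 S.spine := by
  have spine_zero : r.spine = 0 ↔ S.spine = 0 := by
    rw [spine_eq_zero_iff, spine_eq_zero_iff, hS]
  have canopy_node : canopy (node l r) =
      canopy l ++ (if 0 = r.spine then 0 else 1) :: (canopy r).tail :=
    canopy_splice (i := 0) (Nat.zero_le _)
  have marks : ((if i = S.spine then 0 else 1) = if 0 = r.spine then 0 else 1) ↔
      i < max 1 S.spine := by
    split_ifs <;> grind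
  have tails : (canopy S).tail = (canopy r).tail ↔ canopy S = canopy r := by
    rw [canopy_eq_cons S, canopy_eq_cons r, List.cons_inj_right, List.tail_cons, List.tail_cons]
  have lengths : (canopy f).length = (canopy l).length := by
    simp only [canopy, length_canopyAux, hf]
  have split {a b : ℕ} {u v : List ℕ} :
      canopy f ++ a :: u = canopy l ++ b :: v ↔ canopy f = canopy l ∧ u = v ∧ a = b :=
    ⟨fun h => by simpa [and_comm] using List.append_inj h lengths, by rintro ⟨h, rfl, rfl⟩; rw [h]⟩
  rw [canopy_splice hi, canopy_node, split, tails, marks]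

lemma finite_setOf_size_le (n : ℕ) : {T : BT | T.size ≤ n}.Finite := by
  induction n with
  | zero =>
    exact (Set.finite_singleton leaf).subset fun T hT => eq_leaf_of_size_eq_zero (Nat.le_zero.1 hT)
  | succ n ih =>
    refine ((Set.finite_singleton leaf).union (Set.Finite.image2 node ih ih)).subset ?_
    rintro (_ | ⟨l, r⟩) hT
    · exact Or.inl rfl
    · simp only [Set.mem_ofPred_eq, size] at hT
      exact Or.inr ⟨l, show l.size ≤ n by omega, r, show r.size ≤ n by omega, rfl⟩

/-- The finite set of binary trees of size `n`. -/
noncomputable def trees (n : ℕ) : Finset BT :=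
  ((finite_setOf_size_le n).subset (t := {T | T.size = n}) fun _ h => le_of_eq h).toFinset

@[simp]
lemma mem_trees {n : ℕ} {T : BT} : T ∈ trees n ↔ T.size = n := by simp [trees]

lemma trees_zero : trees 0 = {leaf} := by
  ext T
  rw [mem_trees, Finset.mem_singleton]
  exact ⟨eq_leaf_of_size_eq_zero, fun h => h ▸ rfl⟩

lemma sum_trees_succ {M : Type*} [AddCommMonoid M] (n : ℕ) (w : BT → M) :
    ∑ T ∈ trees (n + 1), w T =
      ∑ p ∈ antidiagonal n, ∑ l ∈ trees p.1, ∑ r ∈ trees p.2, w (node l r) := by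
  simp_rw [← Finset.sum_product', Finset.sum_sigma']
  let join (q : (_ : ℕ × ℕ) × (BT × BT)) : BT := node q.2.1 q.2.2
  refine (Finset.sum_nbij join ?_ ?_ ?_ fun _ _ => rfl).symm
  · rintro ⟨p, l, r⟩ h
    simp only [Finset.mem_sigma, mem_antidiagonal, Finset.mem_product, mem_trees] at h
    simp only [join, mem_trees, size]
    omega
  · rintro ⟨⟨i, j⟩, l, r⟩ h ⟨⟨i', j'⟩, l', r'⟩ h' e
    simp only [Finset.mem_coe, Finset.mem_sigma, Finset.mem_product, mem_trees] at h h'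
    obtain ⟨-, rfl, rfl⟩ := h
    obtain ⟨-, rfl, rfl⟩ := h'
    obtain ⟨rfl, rfl⟩ := node.inj e
    rfl
  · rintro (_ | ⟨l, r⟩) h
    · simp [size] at h
    · simp only [Finset.mem_coe, mem_trees, size, Nat.add_right_cancel_iff] at h
      exact ⟨⟨(l.size, r.size), l, r⟩, by simpa using h, rfl⟩

/-! ### Weighted counts of synchronized intervals -/

open Classical in
/-- The trees `T` such that `(T, T')` is a synchronized Tamari interval. -/
noncomputable def syncLower (T' : BT) : Finset BT :=
  {T ∈ trees T'.size | tle T T' ∧ canopy T = canopy T'}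

lemma mem_syncLower {T T' : BT} : T ∈ syncLower T' ↔ tle T T' ∧ canopy T = canopy T' := by
  simp only [syncLower, Finset.mem_filter, mem_trees, and_iff_right_iff_imp]
  exact fun h => h.1.size_eq

lemma syncLower_leaf : syncLower leaf = {leaf} := by
  ext T
  rw [mem_syncLower, Finset.mem_singleton]
  exact ⟨fun h => eq_leaf_of_size_eq_zero h.1.size_eq, fun h => h ▸ ⟨tle.refl _, rfl⟩⟩

lemma ncard_synchronized_intervals (n : ℕ) :
    Set.ncard {p : BT × BT | interval p n ∧ synced p} = ∑ T' ∈ trees n, (syncLower T').card := by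
  let pair : (Σ _ : BT, BT) ↪ BT × BT :=
    ⟨fun q => (q.2, q.1), fun q q' h => by cases q; cases q'; simp_all⟩
  have : {p : BT × BT | interval p n ∧ synced p} = ((trees n).sigma syncLower).map pair := by
    ext ⟨T, T'⟩
    simp only [pair, interval, synced, Set.mem_ofPred_eq, Finset.coe_map, Set.mem_image,
      Finset.mem_coe, Finset.mem_sigma, mem_trees, mem_syncLower, Sigma.exists]
    constructor
    · rintro ⟨⟨-, hn, hle⟩, hc⟩
      exact ⟨T', T, ⟨hn, hle, hc⟩, rfl⟩
    · rintro ⟨_, _, ⟨hn, hle, hc⟩, ⟨⟩⟩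
      exact ⟨⟨hle.size_eq.trans hn, hn, hle⟩, hc⟩
  rw [this, Set.ncard_coe_finset, Finset.card_map, Finset.card_sigma]

section Weight

variable {R : Type*} [CommRing R]

/-- Generating polynomial, evaluated at `x`, of the synchronized intervals with upper tree `T'`
according to the spine length of the lower tree. -/
noncomputable def weight (x : R) (T' : BT) : R := ∑ S ∈ syncLower T', x ^ S.spine

/-- Generating polynomial, evaluated at `x`, of the ways to splice a node into the lower tree of a
synchronized interval with upper tree `T'` so that the canopies stay equal. -/
noncomputable def spliceWeight (x : R) (T' : BT) : R :=
  ∑ S ∈ syncLower T', ∑ i ∈ Finset.range (max 1 S.spine), x ^ i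

lemma weight_leaf (x : R) : weight x leaf = 1 := by simp [weight, syncLower_leaf, spine]

lemma weight_one (T' : BT) : weight (1 : R) T' = (syncLower T').card := by simp [weight]

lemma weight_node (x : R) (l r : BT) :
    weight x (node l r) = x * (weight x l * spliceWeight x r) := by
  have le_spine {i : ℕ} {S : BT} (hi : i < max 1 S.spine) : i ≤ S.spine := by omega
  have regroup : x * (weight x l * spliceWeight x r) =
      ∑ q ∈ syncLower l ×ˢ (syncLower r).sigma fun S => Finset.range (max 1 S.spine),
        x ^ (q.2.2 + q.1.spine + 1) := by
    rw [weight, spliceWeight, Finset.sum_sigma', Finset.sum_mul_sum, Finset.mul_sum,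
      Finset.sum_product]
    refine Finset.sum_congr rfl fun f _ => ?_
    rw [Finset.mul_sum]
    exact Finset.sum_congr rfl fun q _ => by ring
  rw [regroup]
  refine (Finset.sum_nbij (fun q => splice q.1 q.2.2 q.2.1) ?_ ?_ ?_ ?_).symm
  · rintro ⟨f, S, i⟩ h
    simp only [Finset.mem_product, Finset.mem_sigma, Finset.mem_range, mem_syncLower] at h
    obtain ⟨⟨hf, cf⟩, ⟨hS, cS⟩, hi⟩ := h
    exact mem_syncLower.2 ⟨tle_node_iff.2 ⟨f, i, S, le_spine hi, rfl, hf, hS⟩,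
      (canopy_splice_eq_canopy_node_iff (le_spine hi) hf.size_eq hS.size_eq).2 ⟨cf, cS, hi⟩⟩
  · rintro ⟨f, S, i⟩ h ⟨f', S', i'⟩ h' e
    simp only [Finset.coe_product, Set.mem_prod, Finset.mem_coe, Finset.mem_sigma,
      Finset.mem_range, mem_syncLower] at h h'
    obtain ⟨rfl, rfl, rfl⟩ := splice_injective (h.1.1.size_eq.trans h'.1.1.size_eq.symm)
      (le_spine h.2.2) (le_spine h'.2.2) e
    rfl
  · intro T hT
    obtain ⟨hle, hc⟩ := mem_syncLower.1 hT
    obtain ⟨f, i, S, hi, rfl, hf, hS⟩ := tle_node_iff.1 hle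
    obtain ⟨cf, cS, hi'⟩ := (canopy_splice_eq_canopy_node_iff hi hf.size_eq hS.size_eq).1 hc
    refine ⟨⟨f, S, i⟩, ?_, rfl⟩
    simpa [mem_syncLower] using ⟨⟨hf, cf⟩, ⟨hS, cS⟩, by simpa using hi'⟩
  · rintro ⟨f, S, i⟩ h
    simp only [Finset.mem_product, Finset.mem_sigma, Finset.mem_range] at h
    rw [spine_splice (le_spine h.2.2)]

lemma map_weight {S : Type*} [CommRing S] (φ : R →+* S) (x : R) (T' : BT) :
    φ (weight x T') = weight (φ x) T' := by
  simp only [weight, map_sum, map_pow]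

lemma spliceWeight_leaf (x : R) : spliceWeight x leaf = 1 := by
  simp [spliceWeight, syncLower_leaf, spine]

lemma sub_one_mul_spliceWeight (x : R) {T' : BT} (hT' : T'.size ≠ 0) :
    (x - 1) * spliceWeight x T' = weight x T' - weight 1 T' := by
  rw [spliceWeight, Finset.mul_sum, weight, weight, ← Finset.sum_sub_distrib]
  refine Finset.sum_congr rfl fun S hS => ?_
  have : S.spine ≠ 0 := by
    rwa [Ne, spine_eq_zero_iff, (mem_syncLower.1 hS).1.size_eq]
  rw [max_eq_right (Nat.one_le_iff_ne_zero.2 this), mul_geom_sum, one_pow]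

/-- Generating series of binary trees by size, each tree `T` counted with weight `w T`. -/
noncomputable def treeSeries (w : BT → R) : R⟦X⟧ := mk fun n => ∑ T ∈ trees n, w T

lemma treeSeries_eq_of_node {w u v : BT → R} {x : R}
    (h : ∀ l r, w (node l r) = x * (u l * v r)) :
    treeSeries w = C (w leaf) + X * (C x * (treeSeries u * treeSeries v)) := by
  ext n
  cases n with
  | zero => simp [treeSeries, trees_zero]
  | succ n =>
    rw [map_add, coeff_succ_C, zero_add, coeff_succ_X_mul, coeff_C_mul, coeff_mul]
    simp only [treeSeries, coeff_mk, sum_trees_succ, h, Finset.sum_mul_sum]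
    simp only [Finset.mul_sum]

/-- Generating series of synchronized intervals by size, the spine length of the lower tree being
recorded by powers of `x`. -/
noncomputable def intervalSeries (x : R) : R⟦X⟧ := treeSeries (weight x)

lemma map_intervalSeries {S : Type*} [CommRing S] (φ : R →+* S) (x : R) :
    PowerSeries.map φ (intervalSeries x) = intervalSeries (φ x) := by
  ext n
  simp [intervalSeries, treeSeries, map_weight]

lemma coeff_intervalSeries_one (n : ℕ) :
    coeff n (intervalSeries (1 : R)) =
      (Set.ncard {p : BT × BT | interval p n ∧ synced p} : ℕ) := by
  simp [intervalSeries, treeSeries, weight_one, ncard_synchronized_intervals]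

lemma sub_one_mul_treeSeries_spliceWeight (x : R) :
    (C x - 1) * treeSeries (spliceWeight x) =
      C x - 1 + intervalSeries x - intervalSeries 1 := by
  have hC : C x - 1 = C (x - 1) := by rw [map_sub, map_one]
  ext n
  rw [hC, coeff_C_mul]
  cases n with
  | zero => simp [intervalSeries, treeSeries, trees_zero, weight_leaf, spliceWeight_leaf]
  | succ n =>
    rw [map_sub, map_add, coeff_succ_C, zero_add]
    simp only [intervalSeries, treeSeries, coeff_mk]
    rw [Finset.mul_sum, ← Finset.sum_sub_distrib]
    refine Finset.sum_congr rfl fun T hT => sub_one_mul_spliceWeight x ?_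
    rw [mem_trees.1 hT]
    exact n.succ_ne_zero

theorem intervalSeries_functional_equation (x : R) :
    (C x - 1) * (intervalSeries x - 1) =
      X * C x * intervalSeries x * (C x - 1 + intervalSeries x - intervalSeries 1) := by
  have decomposition : intervalSeries x =
      1 + X * (C x * (intervalSeries x * treeSeries (spliceWeight x))) := by
    have h := treeSeries_eq_of_node (weight_node x)
    rwa [weight_leaf, map_one] at h
  linear_combination (C x - 1) * decomposition +
    X * C x * intervalSeries x * sub_one_mul_treeSeries_spliceWeight x

end Weight

end BT

/-! ### Solving the functional equation -/

section SeriesEquations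

variable {R : Type*} [CommRing R]

lemma eq_of_X_pow_dvd_sub_succ {f g : R⟦X⟧}
    (h : ∀ n, X ^ n ∣ f - g → X ^ (n + 1) ∣ f - g) : f = g := by
  have dvd (n : ℕ) : X ^ n ∣ f - g := by
    induction n with
    | zero => simp
    | succ n ih => exact h n ih
  ext n
  rw [← sub_eq_zero, ← map_sub]
  exact X_pow_dvd_iff.1 (dvd (n + 1)) n n.lt_succ_self

/-- The `n`-th iterate of `Φ` at `0` is correct modulo `X ^ n`. -/
lemma existsUnique_eq_of_X_pow_succ_dvd {Φ : R⟦X⟧ → R⟦X⟧}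
    (hΦ : ∀ ⦃f g n⦄, X ^ n ∣ f - g → X ^ (n + 1) ∣ Φ f - Φ g) : ∃! f, f = Φ f := by
  have cauchy (n k : ℕ) : X ^ n ∣ Φ^[n + k] 0 - Φ^[n] 0 := by
    induction n with
    | zero => simp
    | succ n ih =>
      rw [Nat.succ_add, Function.iterate_succ_apply', Function.iterate_succ_apply']
      exact hΦ ih
  let f : R⟦X⟧ := mk fun n => coeff n (Φ^[n + 1] 0)
  have limit (n : ℕ) : X ^ n ∣ f - Φ^[n] 0 := by
    rw [X_pow_dvd_iff]
    intro m hm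
    obtain ⟨k, rfl⟩ := Nat.exists_eq_add_of_lt hm
    have := X_pow_dvd_iff.1 (cauchy (m + 1) k) m m.lt_succ_self
    rw [map_sub, coeff_mk, ← neg_sub, ← map_sub, add_right_comm, this, neg_zero]
  have fixed : f = Φ f := eq_of_X_pow_dvd_sub_succ fun n _ => by
    have := dvd_sub (limit (n + 1)) (hΦ (limit n))
    rwa [Function.iterate_succ_apply', sub_sub_sub_cancel_right] at this
  refine ⟨f, fixed, fun g hg => eq_of_X_pow_dvd_sub_succ fun n h => ?_⟩
  rw [hg, fixed]
  exact hΦ h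

lemma existsUnique_eq_one_add_X_mul_eval (p : Polynomial R⟦X⟧) :
    ∃! f : R⟦X⟧, f = 1 + X * p.eval f :=
  existsUnique_eq_of_X_pow_succ_dvd fun f g n h => by
    rw [add_sub_add_left_eq_sub, ← mul_sub, pow_succ']
    exact mul_dvd_mul_left X (h.trans (Polynomial.sub_dvd_eval_sub f g p))

lemma existsUnique_eq_one_add_X_mul_quadratic (a c : R⟦X⟧) :
    ∃! f : R⟦X⟧, f = 1 + X * (a * f * (1 + c * f)) := by
  let p := Polynomial.C a * Polynomial.X * (1 + Polynomial.C c * Polynomial.X)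
  have p_eval (f : R⟦X⟧) : p.eval f = a * f * (1 + c * f) := by simp [p]
  simpa only [p_eval] using existsUnique_eq_one_add_X_mul_eval p

/-- The functional equation with one catalytic variable satisfied by the generating series of
synchronized intervals. The catalytic variable is `Polynomial.X`, the size variable is
`PowerSeries.X`, and the last term is the specialization of `F` at catalytic variable `1`. -/
def IsCatalyticSolution (F : (Polynomial R)⟦X⟧) : Prop :=
  (C Polynomial.X - 1) * (F - 1) = X * C Polynomial.X * F *
    (C Polynomial.X - 1 + F - map Polynomial.C (map (Polynomial.evalRingHom 1) F))

lemma X_pow_dvd_of_X_pow_dvd_C_X_sub_one_mul {F : (Polynomial R)⟦X⟧} {n : ℕ}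
    (h : X ^ n ∣ (C Polynomial.X - 1) * F) : X ^ n ∣ F := by
  have monic : (Polynomial.X - Polynomial.C (1 : R)).Monic := Polynomial.monic_X_sub_C 1
  have hC : (C Polynomial.X - 1 : (Polynomial R)⟦X⟧) = C (Polynomial.X - Polynomial.C 1) := by
    simp only [map_sub, map_one]
  rw [X_pow_dvd_iff] at h ⊢
  intro m hm
  rw [← monic.mul_right_eq_zero_iff, ← coeff_C_mul, ← hC]
  exact h m hm

lemma IsCatalyticSolution.eq {F G : (Polynomial R)⟦X⟧} (hF : IsCatalyticSolution F)
    (hG : IsCatalyticSolution G) : F = G := by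
  refine eq_of_X_pow_dvd_sub_succ fun n h => X_pow_dvd_of_X_pow_dvd_C_X_sub_one_mul ?_
  let spec : (Polynomial R)⟦X⟧ →+* (Polynomial R)⟦X⟧ :=
    (map Polynomial.C).comp (map (Polynomial.evalRingHom 1))
  have h_spec : X ^ n ∣ spec F - spec G := by
    have := map_dvd spec h
    rwa [map_pow, RingHom.comp_apply, map_X, map_X, map_sub] at this
  have difference : (C Polynomial.X - 1) * (F - G) = X * (C Polynomial.X *
      ((C Polynomial.X - 1 + F - spec F + G) * (F - G) - G * (spec F - spec G))) := by
    change _ = _ * (_ - spec F) at hF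
    change _ = _ * (_ - spec G) at hG
    linear_combination hF - hG
  rw [difference, pow_succ']
  exact mul_dvd_mul_left X
    (((h.mul_left _).sub (h_spec.mul_left _)).mul_left _)

lemma isCatalyticSolution_intervalSeries :
    IsCatalyticSolution (BT.intervalSeries (Polynomial.X : Polynomial R)) := by
  rw [IsCatalyticSolution, BT.intervalSeries_functional_equation, BT.map_intervalSeries,
    BT.map_intervalSeries, Polynomial.coe_evalRingHom, Polynomial.eval_X, map_one]

/-- In terms of `z = t b²` both sides become polynomials in `x`, `z` and `w`, since the equation for
`b` gives `t = z (1 - z)²` and `t b = z (1 - z)`. -/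
lemma catalytic_identity {t x b w : R} (hb : b = 1 + t * b ^ 3)
    (hw : w = 1 + t * (x * b * w * (1 + t * b ^ 2 * w))) :
    (x - 1) * (w - x * t ^ 2 * b ^ 4 * w ^ 2 - 1) = t * x * (w - x * t ^ 2 * b ^ 4 * w ^ 2) *
      (x - 1 + (w - x * t ^ 2 * b ^ 4 * w ^ 2) - (3 * b - 1 - b ^ 2)) := by
  obtain ⟨z, hz⟩ : ∃ z, z = t * b ^ 2 := ⟨_, rfl⟩
  have b_mul : b * (1 - z) = 1 := by linear_combination -b * hz + hb
  have t_mul_b : t * b = z * (1 - z) := by linear_combination (-t * b) * b_mul - (1 - z) * hz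
  have t_eq : t = z * (1 - z) ^ 2 := by linear_combination (-t) * b_mul + (1 - z) * t_mul_b
  have w_eq : w = 1 + x * (z * (1 - z)) * w * (1 + z * w) := by
    rw [← t_mul_b, hz]
    linear_combination hw
  have c_eq : t * (3 * b - 1 - b ^ 2) = 3 * (z * (1 - z)) - z * (1 - z) ^ 2 - z := by
    linear_combination 3 * t_mul_b - t_eq + hz
  have f_eq : w - x * t ^ 2 * b ^ 4 * w ^ 2 = w - x * z ^ 2 * w ^ 2 := by rw [hz]; ring
  rw [f_eq]
  set f := w - x * z ^ 2 * w ^ 2 with f_def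
  calc
    (x - 1) * (f - 1) = x * f * (z * (1 - z) ^ 2 * (x - 1 + f) -
        (3 * (z * (1 - z)) - z * (1 - z) ^ 2 - z)) := by
      rw [f_def]
      linear_combination (x - 1 + x * z * (z ^ 2 - (1 - z) ^ 2 - x * z * (1 - z)) * w +
        x ^ 2 * (1 - z) * z ^ 3 * w ^ 2) * w_eq
    _ = t * x * f * (x - 1 + f - (3 * b - 1 - b ^ 2)) := by
      rw [← c_eq, ← t_eq]
      ring

theorem BT.intervalSeries_one_eq {B : R⟦X⟧} (hB : B = 1 + X * B ^ 3) :
    BT.intervalSeries (1 : R) = 3 * B - 1 - B ^ 2 := by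
  let x : (Polynomial R)⟦X⟧ := C Polynomial.X
  let b : (Polynomial R)⟦X⟧ := map Polynomial.C B
  let spec : (Polynomial R)⟦X⟧ →+* R⟦X⟧ := map (Polynomial.evalRingHom 1)
  have hb : b = 1 + X * b ^ 3 := by simpa [b] using congrArg (map Polynomial.C) hB
  have spec_x : spec x = 1 := by simp [spec, x]
  have spec_b : spec b = B := by ext n; simp [spec, b]
  have spec_X : spec X = X := map_X _
  obtain ⟨W, hW, -⟩ := existsUnique_eq_one_add_X_mul_quadratic (x * b) (X * b ^ 2)
  have spec_W : spec W = B := by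
    refine (existsUnique_eq_one_add_X_mul_quadratic B (X * B ^ 2)).unique ?_ ?_
    · simpa [spec_x, spec_b, spec_X] using congrArg spec hW
    · linear_combination (1 + X * B ^ 2) * hB
  let F := W - x * X ^ 2 * b ^ 4 * W ^ 2
  have spec_F : spec F = 3 * B - 1 - B ^ 2 := by
    simp only [F, map_sub, map_mul, map_pow, spec_x, spec_b, spec_X, spec_W]
    linear_combination (-1 + B + X * B ^ 3) * hB
  have hF : IsCatalyticSolution F := by
    change _ = _ * (_ - map Polynomial.C (spec F))
    rw [spec_F]
    simp only [map_sub, map_mul, map_ofNat, map_one, map_pow]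
    exact catalytic_identity hb hW
  calc
    BT.intervalSeries 1 = spec (BT.intervalSeries Polynomial.X) := by
      simp [spec, BT.map_intervalSeries]
    _ = spec F := by rw [isCatalyticSolution_intervalSeries.eq hF]
    _ = 3 * B - 1 - B ^ 2 := spec_F

end SeriesEquations

/-! ### Fuss–Catalan coefficients -/

section FussCatalan

variable {R : Type*} [CommRing R] {p : ℕ} {B : R⟦X⟧}

lemma coeff_zero_pow_of_eq_one_add (hB : B = 1 + X * B ^ (p + 1)) (r : ℕ) :
    coeff 0 (B ^ r) = 1 := by
  have : constantCoeff B = 1 := by rw [hB]; simp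
  rw [coeff_zero_eq_constantCoeff_apply, map_pow, this, one_pow]

lemma coeff_succ_pow_succ (hB : B = 1 + X * B ^ (p + 1)) (n r : ℕ) :
    coeff (n + 1) (B ^ (r + 1)) = coeff (n + 1) (B ^ r) + coeff n (B ^ (r + (p + 1))) := by
  have : B ^ (r + 1) = B ^ r + X * B ^ (r + (p + 1)) := by
    rw [pow_add B r (p + 1), pow_succ]
    linear_combination B ^ r * hB
  rw [this, map_add, coeff_succ_X_mul]

variable [NoZeroDivisors R] [CharZero R]

theorem coeff_pow_mul_of_eq_one_add (hB : B = 1 + X * B ^ (p + 1)) (n r : ℕ) :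
    coeff n (B ^ r) * ((p + 1) * n + r : ℕ) = r * ((p + 1) * n + r).choose n := by
  induction n generalizing r with
  | zero => rw [coeff_zero_pow_of_eq_one_add hB]; simp
  | succ n ihn =>
    induction r with
    | zero => simp [coeff_one]
    | succ r ihr =>
      obtain ⟨N, hN⟩ : ∃ N, N = (p + 1) * (n + 1) + r := ⟨_, rfl⟩
      have hN' : (p + 1) * n + (r + (p + 1)) = N := by rw [hN]; ring
      have hN_cast : (N : R) = (p + 1) * (n + 1) + r := by rw [hN]; push_cast; ring
      have left := ihn (r + (p + 1))
      have N_ne_zero : (N : R) ≠ 0 := Nat.cast_ne_zero.2 (by rw [hN]; positivity)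
      have pascal : ((N + 1).choose (n + 1) : R) = N.choose n + N.choose (n + 1) := by
        rw [Nat.choose_succ_succ, Nat.cast_add]
      have absorption : (N.choose (n + 1) : R) * (n + 1) = N.choose n * (N - n) := by
        have n_le : n ≤ N := by rw [hN]; nlinarith
        exact_mod_cast N.choose_succ_right_eq n
      rw [hN'] at left
      rw [← hN] at ihr
      rw [← add_assoc _ r 1, ← hN, pascal, coeff_succ_pow_succ hB]
      refine mul_left_cancel₀ N_ne_zero ?_
      push_cast at left ihr ⊢
      linear_combination (N + 1) * (left + ihr) - (p + 1) * absorption -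
        (N.choose n + N.choose (n + 1)) * hN_cast

theorem succ_mul_coeff_succ_pow (hB : B = 1 + X * B ^ (p + 1)) (n r : ℕ) :
    (n + 1) * coeff (n + 1) (B ^ r) = r * ((p + 1) * n + p + r).choose n := by
  have N_ne_zero : (((p + 1) * (n + 1) + r : ℕ) : R) ≠ 0 := Nat.cast_ne_zero.2 (by positivity)
  have absorption : (((p + 1) * (n + 1) + r : ℕ) : R) * ((p + 1) * n + p + r).choose n =
      ((p + 1) * (n + 1) + r).choose (n + 1) * (n + 1) := by
    have := Nat.add_one_mul_choose_eq ((p + 1) * n + p + r) n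
    rw [show (p + 1) * n + p + r + 1 = (p + 1) * (n + 1) + r by ring] at this
    exact_mod_cast this
  refine mul_right_cancel₀ N_ne_zero ?_
  linear_combination (n + 1) * coeff_pow_mul_of_eq_one_add hB (n + 1) r - r * absorption

theorem coeff_succ_three_mul_sub_one_sub_sq {B : R⟦X⟧} (hB : B = 1 + X * B ^ 3) (n : ℕ) :
    (n + 1) * (n + 2) * coeff (n + 1) (3 * B - 1 - B ^ 2) = 2 * ((3 * n + 3).choose n : R) := by
  have coeff_B : (n + 1) * coeff (n + 1) B = (3 * n + 3).choose n := by
    simpa using succ_mul_coeff_succ_pow hB n 1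
  have coeff_B_sq : (n + 1) * coeff (n + 1) (B ^ 2) = 2 * ((3 * n + 4).choose n : R) := by
    simpa using succ_mul_coeff_succ_pow hB n 2
  have absorption :
      ((3 * n + 3).choose n : R) * (3 * n + 4) = (3 * n + 4).choose n * (2 * n + 4) := by
    have := Nat.choose_mul_succ_eq (3 * n + 3) n
    rw [show 3 * n + 3 + 1 - n = 2 * n + 4 by omega] at this
    exact_mod_cast this
  rw [map_sub, map_sub, ← map_ofNat C 3, coeff_C_mul, coeff_one, if_neg n.succ_ne_zero]
  linear_combination 3 * (n + 2) * coeff_B - (n + 2) * coeff_B_sq + absorption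

end FussCatalan

theorem count_synchronized_intervals (n : ℕ) (hn : 1 ≤ n) :
    n * (n + 1) * Set.ncard {p : BT × BT | BT.interval p n ∧ BT.synced p} =
      2 * Nat.choose (3 * n) (n - 1) := by
  obtain ⟨m, rfl⟩ := Nat.exists_eq_add_of_le' hn
  obtain ⟨B, hB, -⟩ := existsUnique_eq_one_add_X_mul_eval (Polynomial.X ^ 3 : Polynomial ℤ⟦X⟧)
  rw [Polynomial.eval_pow, Polynomial.eval_X] at hB
  have count := coeff_succ_three_mul_sub_one_sub_sq hB m
  rw [← BT.intervalSeries_one_eq hB, BT.coeff_intervalSeries_one] at count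
  exact_mod_cast count
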